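/- Let N ≥ 1, p ∈ [1, ∞), and s ∈ (0,1) be such that N > sp. Then for every u ∈ C_c^∞(ℝ^N), ∫_{ℝ^N} |u(x)|^p / |x|^{sp} dx ≤ Λ_{N,s,p} ∫_{ℝ^N} ∫_{ℝ^N} |u(x) − u(y)|^p / |x−y|^{N+sp} dx dy. -/

import Mathlib

open MeasureTheory Metric Set

noncomputable section

/-- The surface measure on the unit sphere `S^{N-1} ⊆ ℝ^N` induced by the Lebesgue measure. -/
def sphereMeasure (N : ℕ) : Measure (sphere (0 : EuclideanSpace ℝ (Fin N)) 1) :=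
  (volume : Measure (EuclideanSpace ℝ (Fin N))).toSphere

open Classical in
/-- Extension of a function `g` on the unit sphere to `ℝ^N` as `x ↦ g (x/|x|)`
(with junk value `0` at the origin). -/
def sphereExt {N : ℕ} (g : sphere (0 : EuclideanSpace ℝ (Fin N)) 1 → ℝ)
    (x : EuclideanSpace ℝ (Fin N)) : ℝ :=
  if hx : ‖x‖⁻¹ • x ∈ sphere (0 : EuclideanSpace ℝ (Fin N)) 1 then g ⟨‖x‖⁻¹ • x, hx⟩ else 0

/-- The `L^q(S^{N-1})` norm `(∫_{S^{N-1}} |g|^q dθ)^{1/q}`. -/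
def sphereLqNorm {N : ℕ} (q : ℝ) (g : sphere (0 : EuclideanSpace ℝ (Fin N)) 1 → ℝ) : ℝ :=
  (∫ θ, |g θ| ^ q ∂(sphereMeasure N)) ^ (1 / q)

/-- The total surface measure `|S^{N-1}|` of the unit sphere in `ℝ^N`. -/
def sphereVol (N : ℕ) : ℝ := (sphereMeasure N univ).toReal

/-- The kernel `Ψ_{N,s,p}(r)` from the sharp fractional Hardy inequality of
Frank and Seiringer. -/
def fracPsi (N : ℕ) (s p r : ℝ) : ℝ :=
  if N = 1 then (1 - r) ^ (-(1 + s * p)) + (1 + r) ^ (-(1 + s * p))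
  else sphereVol (N - 1) *
    ∫ t in Ioo (-1 : ℝ) 1,
      (1 - t ^ 2) ^ (((N : ℝ) - 3) / 2) / (1 - 2 * r * t + r ^ 2) ^ (((N : ℝ) + s * p) / 2)

/-- The sharp fractional Hardy constant `Λ_{N,s,p}`. -/
def fracLambda (N : ℕ) (s p : ℝ) : ℝ :=
  (2 * ∫ r in Ioo (0 : ℝ) 1,
      r ^ (s * p - 1) * |1 - r ^ (((N : ℝ) - s * p) / p)| ^ p * fracPsi N s p r)⁻¹

/-!
The function `‖x‖ ^ (-α)` with `α = (N - s * p) / p` is a virtual ground state of the inequality.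
For `‖y‖ < ‖x‖` and `t = (‖y‖ / ‖x‖) ^ α`, convexity of `|·| ^ p` gives the discrete Picone
inequality
`(1 - t) ^ (p - 1) * |u y| ^ p ≤ |u x - u y| ^ p + ((1 - t) / t) ^ (p - 1) * |u x| ^ p`.
Integrate it against the Gagliardo kernel over the pairs with `‖y‖ / ‖x‖ < δ < 1`. In polar
coordinates both weighted terms factor as the Hardy integral `∫ |u x| ^ p / ‖x‖ ^ (s * p)` times a
one-dimensional integral in `r = ‖y‖ / ‖x‖` of a coefficient against the spherical mean `Ψ` of the
kernel. These one-dimensional integrals are finite because `δ < 1` keeps away from the diagonal, so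
they can be subtracted, and their difference is the integral over `(0, δ)` of the density that
defines the constant. The symmetry `x ↔ y` provides the factor two, and `δ → 1` concludes.
-/

section

open Module Real
open scoped ENNReal

section RealLine

lemma lintegral_real_eq_lintegral_Ioi_add_neg {f : ℝ → ℝ≥0∞} (hf : Measurable f) :
    ∫⁻ a, f a = ∫⁻ r in Ioi 0, (f r + f (-r)) := by
  have hneg : ∫⁻ a in Iic 0, f a = ∫⁻ a in Ioi 0, f (-a) := by
    rw [setLIntegral_congr Iio_ae_eq_Iic.symm, ← (Measure.measurePreserving_neg
      (volume : Measure ℝ)).setLIntegral_comp_preimage measurableSet_Iio hf]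
    simp
  rw [← lintegral_add_compl _ measurableSet_Ioi, compl_Ioi, hneg, ← lintegral_add_left hf]

lemma lintegral_Ioi_comp_mul_left {c : ℝ} (hc : 0 < c) (f : ℝ → ℝ≥0∞) :
    ∫⁻ r in Ioi 0, f r = ∫⁻ r in Ioi 0, ENNReal.ofReal c * f (c * r) := by
  have h := lintegral_image_eq_lintegral_abs_deriv_mul (f := fun r : ℝ => c * r)
    (f' := fun _ => c) measurableSet_Ioi
    (fun r _ => by simpa using ((hasDerivAt_id r).const_mul c).hasDerivWithinAt)
    (mul_right_injective₀ hc.ne').injOn f (s := Ioi 0)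
  simpa only [image_const_mul_Ioi_zero hc, abs_of_pos hc] using h

lemma lintegral_Ioi_comp_inv (f : ℝ → ℝ≥0∞) :
    ∫⁻ r in Ioi 0, f r = ∫⁻ r in Ioi 0, ENNReal.ofReal (r ^ (-2 : ℝ)) * f r⁻¹ := by
  have himage : Inv.inv '' Ioi (0 : ℝ) = Ioi 0 := by
    ext r
    simp
  rw [← himage, lintegral_image_eq_lintegral_abs_deriv_mul measurableSet_Ioi
    (fun r hr => (hasDerivAt_inv (ne_of_gt hr)).hasDerivWithinAt) inv_injective.injOn, himage]
  refine setLIntegral_congr_fun measurableSet_Ioi fun r (hr : 0 < r) => ?_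
  have hpow : r ^ (-2 : ℝ) = (r ^ 2)⁻¹ := by exact_mod_cast Real.rpow_neg_natCast r 2
  simp only [abs_neg, hpow, abs_of_pos (inv_pos.2 (pow_pos hr 2))]

lemma lintegral_sin_pow_mul_comp_cos (n : ℕ) (h : ℝ → ℝ≥0∞) :
    ∫⁻ φ in Ioo 0 π, ENNReal.ofReal (sin φ ^ n) * h (cos φ) =
      ∫⁻ t in Ioo (-1 : ℝ) 1, ENNReal.ofReal ((1 - t ^ 2) ^ (((n : ℝ) - 1) / 2)) * h t := by
  have himage : cos '' Ioo 0 π = Ioo (-1) 1 := Real.cosPartialHomeomorph.image_source_eq_target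
  rw [← himage, lintegral_image_eq_lintegral_abs_deriv_mul measurableSet_Ioo
    (fun φ _ => (hasDerivAt_cos φ).hasDerivWithinAt) (injOn_cos.mono Ioo_subset_Icc_self)]
  refine setLIntegral_congr_fun measurableSet_Ioo fun φ hφ => ?_
  have hsin : 0 < sin φ := sin_pos_of_pos_of_lt_pi hφ.1 hφ.2
  have hpow : (1 - cos φ ^ 2) ^ (((n : ℝ) - 1) / 2) = sin φ ^ ((n : ℝ) - 1) := by
    rw [← sin_sq, ← rpow_natCast_mul hsin.le]
    congr 1
    push_cast
    ring
  rw [← mul_assoc, ← ENNReal.ofReal_mul (abs_nonneg _), abs_neg, abs_of_pos hsin, hpow,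
    rpow_sub_one hsin.ne', mul_div_cancel₀ _ hsin.ne', rpow_natCast]

lemma lintegral_upperHalfPlane_polar {f : ℝ × ℝ → ℝ≥0∞} (hf : Measurable f) :
    ∫⁻ a : ℝ, ∫⁻ τ in Ioi (0 : ℝ), f (a, τ) =
      ∫⁻ r in Ioi (0 : ℝ), ∫⁻ φ in Ioo 0 π,
        ENNReal.ofReal r * f (r * cos φ, r * sin φ) := by
  let g := (Prod.snd ⁻¹' Ioi (0 : ℝ)).indicator f
  have hg : Measurable g := hf.indicator (measurable_snd measurableSet_Ioi)
  have hcartesian : ∫⁻ a : ℝ, ∫⁻ τ in Ioi (0 : ℝ), f (a, τ) = ∫⁻ z : ℝ × ℝ, g z := by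
    rw [Measure.volume_eq_prod, lintegral_prod _ hg.aemeasurable]
    simp only [← lintegral_indicator measurableSet_Ioi]
    rfl
  have hpolar : Measurable fun z : ℝ × ℝ => ENNReal.ofReal z.1 * g (polarCoord.symm z) := by
    simp only [polarCoord_symm_apply]
    fun_prop
  rw [hcartesian, ← lintegral_comp_polarCoord_symm, polarCoord_target, Measure.volume_eq_prod,
    ← Measure.prod_restrict]
  simp only [smul_eq_mul]
  rw [lintegral_prod _ hpolar.aemeasurable]
  refine setLIntegral_congr_fun measurableSet_Ioi fun r (hr : 0 < r) => ?_
  have hsubset : Ioo 0 π ⊆ Ioo (-π) π := Ioo_subset_Ioo_left (neg_nonpos.2 pi_pos.le)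
  have hupper : ∀ φ ∈ Ioo (-π) π, (0 < r * sin φ ↔ φ ∈ Ioo 0 π) := fun φ hφ => by
    refine ⟨fun h => ⟨?_, hφ.2⟩, fun h => mul_pos hr (sin_pos_of_pos_of_lt_pi h.1 h.2)⟩
    by_contra! h0
    exact h.not_ge (mul_nonpos_of_nonneg_of_nonpos hr.le
      (sin_nonpos_of_nonpos_of_neg_pi_le h0 hφ.1.le))
  rw [← inter_eq_self_of_subset_left hsubset, ← setLIntegral_indicator measurableSet_Ioo]
  refine setLIntegral_congr_fun measurableSet_Ioo fun φ hφ => ?_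
  by_cases h : φ ∈ Ioo 0 π <;> simp [g, indicator, hupper φ hφ, h]

end RealLine

section PolarCoordinates

variable {E : Type*} [NormedAddCommGroup E] [NormedSpace ℝ E] [FiniteDimensional ℝ E]
  [Nontrivial E] [MeasurableSpace E] [BorelSpace E] (μ : Measure E) [μ.IsAddHaarMeasure]

lemma lintegral_polar {f : E → ℝ≥0∞} (hf : Measurable f) :
    ∫⁻ x, f x ∂μ = ∫⁻ r in Ioi (0 : ℝ), ENNReal.ofReal (r ^ (finrank ℝ E - 1)) *
      ∫⁻ θ, f (r • θ.1) ∂μ.toSphere := by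
  calc
    ∫⁻ x, f x ∂μ = ∫⁻ x : ({0}ᶜ : Set E), f x ∂(μ.comap Subtype.val) := by
      rw [lintegral_subtype_comap (measurableSet_singleton _).compl, restrict_compl_singleton]
    _ = ∫⁻ z, f (z.2.1 • z.1.1) ∂μ.toSphere.prod (.volumeIoiPow (finrank ℝ E - 1)) := by
      rw [← μ.measurePreserving_homeomorphUnitSphereProd.lintegral_comp (by fun_prop)]
      refine lintegral_congr fun x => ?_
      simp [smul_smul, norm_ne_zero_iff.2 x.2]
    _ = ∫⁻ r, ∫⁻ θ, f (r.1 • θ.1) ∂μ.toSphere ∂.volumeIoiPow (finrank ℝ E - 1) :=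
      lintegral_prod_symm _ (by fun_prop)
    _ = _ := by
      rw [Measure.volumeIoiPow,
        lintegral_withDensity_eq_lintegral_mul _ (by fun_prop)
          (Measurable.lintegral_prod_right' (f := fun z : Ioi (0 : ℝ) × sphere (0 : E) 1 =>
            f (z.1.1 • z.2.1)) (by fun_prop))]
      exact lintegral_subtype_comap measurableSet_Ioi (fun r : ℝ =>
        ENNReal.ofReal (r ^ (finrank ℝ E - 1)) * ∫⁻ θ, f (r • θ.1) ∂μ.toSphere)

lemma lintegral_comp_norm {f : ℝ → ℝ≥0∞} (hf : Measurable f) :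
    ∫⁻ x, f ‖x‖ ∂μ = μ.toSphere univ *
      ∫⁻ r in Ioi (0 : ℝ), ENNReal.ofReal (r ^ (finrank ℝ E - 1)) * f r := by
  rw [lintegral_polar μ (by fun_prop), ← lintegral_const_mul _ (by fun_prop)]
  refine setLIntegral_congr_fun measurableSet_Ioi fun r (hr : 0 < r) => ?_
  simp only [norm_smul, norm_eq_abs, abs_of_pos hr, norm_eq_of_mem_sphere, mul_one, lintegral_const]
  ring

end PolarCoordinates

section SphereProjection

/-- The law of the height `⟪e, θ⟫` of a point `θ` of the sphere `S^{N-1}` above the equator of a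
unit vector `e`; see `map_inner_toSphere`. -/
def heightMeasure (N : ℕ) : Measure ℝ :=
  if N = 1 then Measure.dirac 1 + Measure.dirac (-1)
  else ENNReal.ofReal (sphereVol (N - 1)) • (volume.restrict (Ioo (-1 : ℝ) 1)).withDensity
    (fun t => ENNReal.ofReal ((1 - t ^ 2) ^ (((N : ℝ) - 3) / 2)))

lemma lintegral_heightMeasure_one {f : ℝ → ℝ≥0∞} (hf : Measurable f) :
    ∫⁻ t, f t ∂heightMeasure 1 = f 1 + f (-1) := by
  rw [heightMeasure, if_pos rfl, lintegral_add_measure, lintegral_dirac' _ hf,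
    lintegral_dirac' _ hf]

lemma lintegral_heightMeasure_of_ne_one {N : ℕ} (hN : N ≠ 1) {f : ℝ → ℝ≥0∞} (hf : Measurable f) :
    ∫⁻ t, f t ∂heightMeasure N = ENNReal.ofReal (sphereVol (N - 1)) *
      ∫⁻ t in Ioo (-1 : ℝ) 1, ENNReal.ofReal ((1 - t ^ 2) ^ (((N : ℝ) - 3) / 2)) * f t := by
  rw [heightMeasure, if_neg hN, lintegral_smul_measure,
    lintegral_withDensity_eq_lintegral_mul _ (by fun_prop) hf]
  rfl

lemma ofReal_sphereVol (n : ℕ) : ENNReal.ofReal (sphereVol n) =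
    (volume : Measure (EuclideanSpace ℝ (Fin n))).toSphere univ :=
  ENNReal.ofReal_toReal (measure_ne_top (volume : Measure (EuclideanSpace ℝ (Fin n))).toSphere _)

variable {E : Type*} [NormedAddCommGroup E] [InnerProductSpace ℝ E] [FiniteDimensional ℝ E]
  [MeasurableSpace E] [BorelSpace E] {e : E}

lemma lintegral_inner_norm_cylindrical {n : ℕ} (hn : finrank ℝ E = n + 1) (he : ‖e‖ = 1)
    {F : ℝ × ℝ → ℝ≥0∞} (hF : Measurable F) :
    ∫⁻ y : E, F (inner ℝ e y, ‖y‖) =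
      ∫⁻ a : ℝ, ∫⁻ w : EuclideanSpace ℝ (Fin n), F (a, √(a ^ 2 + ‖w‖ ^ 2)) := by
  have horthonormal : Orthonormal ℝ (({0} : Set (Fin (n + 1))).domRestrict fun _ => e) :=
    ⟨fun _ => he, fun i j hij => absurd (Subsingleton.elim i j) hij⟩
  obtain ⟨b, hb⟩ := horthonormal.exists_orthonormalBasis_extension_of_card_eq (by simp [hn])
  have hcoordinates : ∫⁻ y : E, F (inner ℝ e y, ‖y‖) =
      ∫⁻ z : EuclideanSpace ℝ (Fin (n + 1)), F (z 0, ‖z‖) := by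
    rw [← b.measurePreserving_repr.lintegral_comp
      (f := fun z : EuclideanSpace ℝ (Fin (n + 1)) => F (z 0, ‖z‖)) (by fun_prop)]
    simp [b.repr_apply_apply, hb 0 rfl]
  rw [hcoordinates, ← (PiLp.volume_preserving_toLp (Fin (n + 1))).lintegral_comp (by fun_prop),
    ← (volume_preserving_piFinSuccAbove (fun _ : Fin (n + 1) => ℝ) 0).symm.lintegral_comp
      (by fun_prop), Measure.volume_eq_prod, lintegral_prod _ (by fun_prop)]
  refine lintegral_congr fun a => ?_
  rw [← (PiLp.volume_preserving_toLp (Fin n)).lintegral_comp (by fun_prop)]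
  simp [EuclideanSpace.norm_eq, Fin.sum_univ_succ, sq_sqrt, Finset.sum_nonneg, sq_nonneg]

lemma lintegral_inner_norm_of_finrank_eq_one (hE : finrank ℝ E = 1) (he : ‖e‖ = 1)
    {F : ℝ × ℝ → ℝ≥0∞} (hF : Measurable F) :
    ∫⁻ y : E, F (inner ℝ e y, ‖y‖) =
      ∫⁻ r in Ioi (0 : ℝ), ∫⁻ t, F (r * t, r) ∂heightMeasure 1 := by
  have hline : ∫⁻ y : E, F (inner ℝ e y, ‖y‖) = ∫⁻ a : ℝ, F (a, |a|) := by
    rw [lintegral_inner_norm_cylindrical hE he hF]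
    simp [volume_euclideanSpace_eq_dirac, sqrt_sq_eq_abs]
  rw [hline, lintegral_real_eq_lintegral_Ioi_add_neg (by fun_prop)]
  refine setLIntegral_congr_fun measurableSet_Ioi fun r (hr : 0 < r) => ?_
  simp [lintegral_heightMeasure_one (f := fun t => F (r * t, r)) (by fun_prop), abs_of_pos hr]

lemma lintegral_inner_norm_of_finrank_eq_add_two {m : ℕ} (hE : finrank ℝ E = m + 2)
    (he : ‖e‖ = 1) {F : ℝ × ℝ → ℝ≥0∞} (hF : Measurable F) :
    ∫⁻ y : E, F (inner ℝ e y, ‖y‖) = ∫⁻ r in Ioi (0 : ℝ), ENNReal.ofReal (r ^ (m + 1)) *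
      ∫⁻ t, F (r * t, r) ∂heightMeasure (m + 2) := by
  have hcylinder : ∫⁻ y : E, F (inner ℝ e y, ‖y‖) = ENNReal.ofReal (sphereVol (m + 1)) *
      ∫⁻ a : ℝ, ∫⁻ τ in Ioi (0 : ℝ), ENNReal.ofReal (τ ^ m) * F (a, √(a ^ 2 + τ ^ 2)) := by
    rw [lintegral_inner_norm_cylindrical hE he hF,
      ← lintegral_const_mul' _ _ ENNReal.ofReal_ne_top]
    refine lintegral_congr fun a => ?_
    simpa [ofReal_sphereVol] using lintegral_comp_norm
      (volume : Measure (EuclideanSpace ℝ (Fin (m + 1))))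
      (f := fun τ => F (a, √(a ^ 2 + τ ^ 2))) (by fun_prop)
  rw [hcylinder, lintegral_upperHalfPlane_polar
      (f := fun z => ENNReal.ofReal (z.2 ^ m) * F (z.1, √(z.1 ^ 2 + z.2 ^ 2))) (by fun_prop),
    ← lintegral_const_mul' _ _ ENNReal.ofReal_ne_top]
  refine setLIntegral_congr_fun measurableSet_Ioi fun r (hr : 0 < r) => ?_
  have hexponent : (((m + 2 : ℕ) : ℝ) - 3) / 2 = ((m : ℝ) - 1) / 2 := by push_cast; ring
  rw [lintegral_heightMeasure_of_ne_one (by lia) (by fun_prop), mul_left_comm, hexponent,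
    ← lintegral_sin_pow_mul_comp_cos m (fun t => F (r * t, r))]
  congr 1
  rw [← lintegral_const_mul' _ _ ENNReal.ofReal_ne_top]
  refine setLIntegral_congr_fun measurableSet_Ioo fun φ _ => ?_
  have hradius : √((r * cos φ) ^ 2 + (r * sin φ) ^ 2) = r := by
    rw [mul_pow, mul_pow, ← mul_add, cos_sq_add_sin_sq, mul_one, sqrt_sq hr.le]
  simp only [hradius]
  rw [← mul_assoc, ← mul_assoc, ← ENNReal.ofReal_mul hr.le, ← ENNReal.ofReal_mul (by positivity)]
  ring_nf

lemma lintegral_inner_norm [Nontrivial E] (he : ‖e‖ = 1) {F : ℝ × ℝ → ℝ≥0∞}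
    (hF : Measurable F) :
    ∫⁻ y : E, F (inner ℝ e y, ‖y‖) = ∫⁻ r in Ioi (0 : ℝ), ENNReal.ofReal (r ^ (finrank ℝ E - 1)) *
      ∫⁻ t, F (r * t, r) ∂heightMeasure (finrank ℝ E) := by
  obtain ⟨n, hn⟩ := Nat.exists_eq_add_one.2 (finrank_pos (R := ℝ) (M := E))
  cases n with
  | zero => simp [hn, lintegral_inner_norm_of_finrank_eq_one hn he hF]
  | succ m => simp [hn, lintegral_inner_norm_of_finrank_eq_add_two hn he hF]

lemma exists_weight_lintegral_Ioi_pow_mul_eq_one (n : ℕ) : ∃ w : ℝ → ℝ≥0∞, Measurable w ∧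
    ∫⁻ r in Ioi (0 : ℝ), ENNReal.ofReal (r ^ n) * w r = 1 := by
  refine ⟨(Ioo 0 1).indicator fun r => (ENNReal.ofReal (r ^ n))⁻¹,
    Measurable.indicator (by fun_prop) measurableSet_Ioo, ?_⟩
  have hintegrand : EqOn (fun r : ℝ => ENNReal.ofReal (r ^ n) *
      (Ioo 0 1).indicator (fun r => (ENNReal.ofReal (r ^ n))⁻¹) r)
      ((Ioo 0 1).indicator 1) (Ioi 0) := fun r (hr : 0 < r) => by
    by_cases hmem : r ∈ Ioo (0 : ℝ) 1
    · simp [hmem, ENNReal.mul_inv_cancel, pow_pos hr]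
    · simp [hmem]
  rw [setLIntegral_congr_fun measurableSet_Ioi hintegrand, setLIntegral_indicator
    measurableSet_Ioo, inter_eq_self_of_subset_left Ioo_subset_Ioi_self]
  simp

-- Both measures are recovered from the integral of `w ‖y‖ * h (⟪e, y⟫ / ‖y‖)` over `E`.
theorem map_inner_toSphere [Nontrivial E] (he : ‖e‖ = 1) :
    (volume : Measure E).toSphere.map (fun θ => inner ℝ e θ.1) = heightMeasure (finrank ℝ E) := by
  refine Measure.ext_of_lintegral _ fun h hh => ?_
  obtain ⟨w, hw, hmass⟩ := exists_weight_lintegral_Ioi_pow_mul_eq_one (finrank ℝ E - 1)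
  have hradial : ∀ c : ℝ≥0∞,
      ∫⁻ r in Ioi (0 : ℝ), ENNReal.ofReal (r ^ (finrank ℝ E - 1)) * (w r * c) = c := fun c => by
    simp only [← mul_assoc]
    rw [lintegral_mul_const _ (by fun_prop), hmass, one_mul]
  let F : ℝ × ℝ → ℝ≥0∞ := fun z => w z.2 * h (z.1 / z.2)
  have hspherical : ∫⁻ y : E, F (inner ℝ e y, ‖y‖) =
      ∫⁻ θ, h (inner ℝ e θ.1) ∂(volume : Measure E).toSphere := by
    rw [lintegral_polar volume (f := fun y : E => F (inner ℝ e y, ‖y‖)) (by fun_prop)]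
    refine Eq.trans (setLIntegral_congr_fun measurableSet_Ioi fun r (hr : 0 < r) => ?_) (hradial _)
    have hmeas : Measurable fun θ : sphere (0 : E) 1 => h (inner ℝ e θ.1) := by fun_prop
    simp [F, norm_smul, inner_smul_right, abs_of_pos hr, mul_div_cancel_left₀ _ hr.ne',
      lintegral_const_mul _ hmeas]
  have haxial : ∫⁻ y : E, F (inner ℝ e y, ‖y‖) = ∫⁻ t, h t ∂heightMeasure (finrank ℝ E) := by
    rw [lintegral_inner_norm he (by fun_prop)]
    refine Eq.trans (setLIntegral_congr_fun measurableSet_Ioi fun r (hr : 0 < r) => ?_) (hradial _)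
    simp [F, mul_div_cancel_left₀ _ hr.ne', lintegral_const_mul _ hh]
  rw [lintegral_map hh (by fun_prop), ← hspherical, haxial]

end SphereProjection

section HeightMeasure

instance sFinite_heightMeasure (N : ℕ) : SFinite (heightMeasure N) := by
  unfold heightMeasure
  split_ifs <;> infer_instance

lemma heightMeasure_ae_mem_Icc (N : ℕ) : ∀ᵐ t ∂heightMeasure N, t ∈ Icc (-1 : ℝ) 1 := by
  unfold heightMeasure
  split_ifs
  · rw [ae_add_measure_iff]
    constructor <;> exact (ae_dirac_iff measurableSet_Icc).2 (by norm_num)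
  · refine Measure.ae_smul_measure ((withDensity_absolutelyContinuous _ _).ae_le ?_) _
    filter_upwards [ae_restrict_mem measurableSet_Ioo] with t ht using Ioo_subset_Icc_self ht

variable (E : Type*) [NormedAddCommGroup E] [InnerProductSpace ℝ E] [FiniteDimensional ℝ E]
  [Nontrivial E] [MeasurableSpace E] [BorelSpace E]

lemma heightMeasure_finrank_univ :
    heightMeasure (finrank ℝ E) univ = (volume : Measure E).toSphere univ := by
  obtain ⟨e, he⟩ := exists_norm_eq E zero_le_one
  rw [← map_inner_toSphere he, Measure.map_apply (by fun_prop) MeasurableSet.univ, preimage_univ]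

lemma heightMeasure_finrank_univ_ne_top : heightMeasure (finrank ℝ E) univ ≠ ∞ := by
  rw [heightMeasure_finrank_univ]
  exact measure_ne_top _ _

lemma heightMeasure_finrank_ne_zero : heightMeasure (finrank ℝ E) ≠ 0 := by
  rw [ne_eq, ← Measure.measure_univ_eq_zero, heightMeasure_finrank_univ,
    Measure.measure_univ_eq_zero]
  exact Measure.toSphere_ne_zero _

end HeightMeasure

section RadialKernel

/-- The kernel `Ψ` of the Hardy constant, as an extended nonnegative number: up to a power of `‖x‖`,
the integral of `‖x - y‖ ^ (-(d + q))` over the sphere of radius `r * ‖x‖` in dimension `d`. -/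
def radialKernel (d : ℕ) (q r : ℝ) : ℝ≥0∞ :=
  ∫⁻ t, ENNReal.ofReal ((1 - 2 * r * t + r ^ 2) ^ (-(((d : ℝ) + q) / 2))) ∂heightMeasure d

variable {d : ℕ} {q r : ℝ}

lemma sq_one_sub_le_one_sub_two_mul_add_sq {t : ℝ} (hr : 0 ≤ r) (ht : t ≤ 1) :
    (1 - r) ^ 2 ≤ 1 - 2 * r * t + r ^ 2 := by
  nlinarith [mul_nonneg hr (sub_nonneg.2 ht)]

lemma one_sub_two_mul_add_sq_nonneg {t : ℝ} (hr : 0 ≤ r) (ht : t ≤ 1) : 0 ≤ 1 - 2 * r * t + r ^ 2 :=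
  (sq_nonneg _).trans (sq_one_sub_le_one_sub_two_mul_add_sq hr ht)

lemma sq_rpow_neg_half {a : ℝ} (ha : 0 ≤ a) (b : ℝ) : (a ^ 2) ^ (-(b / 2)) = a ^ (-b) := by
  rw [← rpow_natCast_mul ha]
  congr 1
  push_cast
  ring

lemma measurable_radialKernel (d : ℕ) (q : ℝ) : Measurable (radialKernel d q) :=
  Measurable.lintegral_prod_right' (f := fun z : ℝ × ℝ =>
    ENNReal.ofReal ((1 - 2 * z.1 * z.2 + z.1 ^ 2) ^ (-(((d : ℝ) + q) / 2)))) (by fun_prop)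

lemma lintegral_sq_mul_rpow_heightMeasure {c : ℝ} (hc : 0 ≤ c) (hr : 0 ≤ r) :
    ∫⁻ t, ENNReal.ofReal ((c ^ 2 * (1 - 2 * r * t + r ^ 2)) ^ (-(((d : ℝ) + q) / 2)))
      ∂heightMeasure d = ENNReal.ofReal (c ^ (-((d : ℝ) + q))) * radialKernel d q r := by
  rw [radialKernel, ← lintegral_const_mul' _ _ ENNReal.ofReal_ne_top]
  refine lintegral_congr_ae ?_
  filter_upwards [heightMeasure_ae_mem_Icc d] with t ht
  rw [← ENNReal.ofReal_mul (by positivity),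
    mul_rpow (sq_nonneg c) (one_sub_two_mul_add_sq_nonneg hr ht.2), sq_rpow_neg_half hc]

lemma radialKernel_inv (hr : 0 < r) :
    radialKernel d q r⁻¹ = ENNReal.ofReal (r ^ ((d : ℝ) + q)) * radialKernel d q r := by
  have h := lintegral_sq_mul_rpow_heightMeasure (d := d) (q := q) (inv_pos.2 hr).le hr.le
  rw [inv_rpow hr.le, rpow_neg hr.le, inv_inv] at h
  rw [← h, radialKernel]
  refine lintegral_congr fun t => ?_
  congr 2
  field_simp
  ring

lemma radialKernel_le {δ : ℝ} (hq : 0 ≤ q) (hr : 0 ≤ r) (hrδ : r ≤ δ) (hδ : δ < 1) :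
    radialKernel d q r ≤
      ENNReal.ofReal ((1 - δ) ^ (-((d : ℝ) + q))) * heightMeasure d univ := by
  rw [radialKernel, ← lintegral_const]
  refine lintegral_mono_ae ?_
  filter_upwards [heightMeasure_ae_mem_Icc d] with t ht
  have hδ0 : 0 < 1 - δ := sub_pos.2 hδ
  have hbase : (1 - δ) ^ 2 ≤ 1 - 2 * r * t + r ^ 2 :=
    (by gcongr : (1 - δ) ^ 2 ≤ (1 - r) ^ 2).trans (sq_one_sub_le_one_sub_two_mul_add_sq hr ht.2)
  rw [← sq_rpow_neg_half hδ0.le]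
  exact ENNReal.ofReal_le_ofReal
    (rpow_le_rpow_of_nonpos (by positivity) hbase (neg_nonpos.2 (by positivity)))

lemma radialKernel_ne_zero (hd : heightMeasure d ≠ 0) (hr : r ∈ Ico (0 : ℝ) 1) :
    radialKernel d q r ≠ 0 := by
  intro h
  rw [radialKernel, lintegral_eq_zero_iff (by fun_prop)] at h
  refine hd (ae_eq_bot.1 (Filter.eventually_false_iff_eq_bot.1 ?_))
  filter_upwards [h, heightMeasure_ae_mem_Icc d] with t hzero ht
  have hbase : 0 < 1 - 2 * r * t + r ^ 2 :=
    (pow_pos (sub_pos.2 hr.2) 2).trans_le (sq_one_sub_le_one_sub_two_mul_add_sq hr.1 ht.2)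
  exact (ENNReal.ofReal_pos.2 (rpow_pos_of_pos hbase _)).ne' hzero

lemma fracPsi_one_eq_toReal_radialKernel {s p : ℝ} (hr : r ∈ Ioo (0 : ℝ) 1) :
    fracPsi 1 s p r = (radialKernel 1 (s * p) r).toReal := by
  have hsub : 0 ≤ 1 - r := sub_nonneg.2 hr.2.le
  have hadd : 0 ≤ 1 + r := by linarith [hr.1]
  have hkernel : radialKernel 1 (s * p) r =
      ENNReal.ofReal ((1 - r) ^ (-(1 + s * p))) + ENNReal.ofReal ((1 + r) ^ (-(1 + s * p))) := by
    rw [radialKernel, lintegral_heightMeasure_one (by fun_prop), ← sq_rpow_neg_half hsub,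
      ← sq_rpow_neg_half hadd]
    push_cast
    ring_nf
  rw [hkernel, ← ENNReal.ofReal_add (by positivity) (by positivity),
    ENNReal.toReal_ofReal (by positivity), fracPsi, if_pos rfl]

lemma fracPsi_eq_toReal_radialKernel (d : ℕ) (s p : ℝ) (hr : r ∈ Ioo (0 : ℝ) 1) :
    fracPsi d s p r = (radialKernel d (s * p) r).toReal := by
  obtain rfl | hd := eq_or_ne d 1
  · exact fracPsi_one_eq_toReal_radialKernel hr
  have hnonneg : ∀ t ∈ Ioo (-1 : ℝ) 1, 0 ≤ 1 - t ^ 2 ∧ 0 ≤ 1 - 2 * r * t + r ^ 2 := fun t ht =>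
    ⟨by nlinarith [ht.1, ht.2], one_sub_two_mul_add_sq_nonneg hr.1.le ht.2.le⟩
  rw [fracPsi, if_neg hd, radialKernel, lintegral_heightMeasure_of_ne_one hd (by fun_prop),
    ENNReal.toReal_mul, ENNReal.toReal_ofReal (by exact ENNReal.toReal_nonneg),
    integral_eq_lintegral_of_nonneg_ae _ (Measurable.aestronglyMeasurable (by fun_prop))]
  · congr 2
    refine setLIntegral_congr_fun measurableSet_Ioo fun t ht => ?_
    obtain ⟨hsin, hcos⟩ := hnonneg t ht
    rw [← ENNReal.ofReal_mul (by positivity), rpow_neg hcos, div_eq_mul_inv]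
  · filter_upwards [ae_restrict_mem measurableSet_Ioo] with t ht
    obtain ⟨hsin, hcos⟩ := hnonneg t ht
    exact div_nonneg (rpow_nonneg hsin _) (rpow_nonneg hcos _)

end RadialKernel

section GagliardoKernel

variable {E : Type*} [NormedAddCommGroup E] [InnerProductSpace ℝ E]

/-- The kernel `‖x - y‖ ^ (-(d + q))` of the Gagliardo seminorm in dimension `d`, where `q = s * p`
in terms of the usual parameters. -/
def gagliardoKernel (q : ℝ) (x y : E) : ℝ≥0∞ :=
  ENNReal.ofReal (‖x - y‖ ^ (-((finrank ℝ E : ℝ) + q)))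

lemma gagliardoKernel_comm (q : ℝ) (x y : E) : gagliardoKernel q x y = gagliardoKernel q y x := by
  rw [gagliardoKernel, gagliardoKernel, norm_sub_rev]

lemma gagliardoKernel_eq_inner (q : ℝ) {x : E} (hx : x ≠ 0) (y : E) :
    gagliardoKernel q x y = ENNReal.ofReal ((‖x‖ ^ 2 - 2 * ‖x‖ * inner ℝ (‖x‖⁻¹ • x) y +
      ‖y‖ ^ 2) ^ (-(((finrank ℝ E : ℝ) + q) / 2))) := by
  have hnorm : ‖x‖ ^ 2 - 2 * ‖x‖ * inner ℝ (‖x‖⁻¹ • x) y + ‖y‖ ^ 2 = ‖x - y‖ ^ 2 := by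
    rw [norm_sub_sq_real, real_inner_smul_left]
    field_simp [norm_ne_zero_iff.2 hx]
  rw [gagliardoKernel, hnorm, sq_rpow_neg_half (norm_nonneg _)]

variable [FiniteDimensional ℝ E] [MeasurableSpace E] [BorelSpace E]

@[fun_prop]
lemma measurable_gagliardoKernel (q : ℝ) :
    Measurable fun z : E × E => gagliardoKernel q z.1 z.2 := by
  unfold gagliardoKernel
  fun_prop

variable [Nontrivial E]

lemma lintegral_ratio_mul_gagliardoKernel (q : ℝ) {g : ℝ → ℝ≥0∞} (hg : Measurable g) {x : E}
    (hx : x ≠ 0) :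
    ∫⁻ y, g (‖y‖ / ‖x‖) * gagliardoKernel q x y = ENNReal.ofReal (‖x‖ ^ (-q)) *
      ∫⁻ r in Ioi (0 : ℝ), ENNReal.ofReal (r ^ ((finrank ℝ E : ℝ) - 1)) * g r *
        radialKernel (finrank ℝ E) q r := by
  have hR : 0 < ‖x‖ := norm_pos_iff.2 hx
  have hd : 1 ≤ finrank ℝ E := finrank_pos
  have hunit : ‖‖x‖⁻¹ • x‖ = 1 := by simp [norm_smul, hR.ne']
  simp only [gagliardoKernel_eq_inner q hx]
  set d := finrank ℝ E
  set R := ‖x‖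
  rw [lintegral_inner_norm hunit (F := fun z : ℝ × ℝ => g (z.2 / R) *
      ENNReal.ofReal ((R ^ 2 - 2 * R * z.1 + z.2 ^ 2) ^ (-(((d : ℝ) + q) / 2)))) (by fun_prop),
    lintegral_Ioi_comp_mul_left hR, ← lintegral_const_mul' _ _ ENNReal.ofReal_ne_top]
  refine setLIntegral_congr_fun measurableSet_Ioi fun r (hr : 0 < r) => ?_
  have hfactor : ∀ t, R ^ 2 - 2 * R * (R * r * t) + (R * r) ^ 2 =
      R ^ 2 * (1 - 2 * r * t + r ^ 2) := fun t => by ring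
  have hpowers : ENNReal.ofReal R * ENNReal.ofReal ((R * r) ^ (d - 1)) *
      ENNReal.ofReal (R ^ (-((d : ℝ) + q))) =
      ENNReal.ofReal (R ^ (-q)) * ENNReal.ofReal (r ^ ((d : ℝ) - 1)) := by
    rw [← ENNReal.ofReal_mul (by positivity), ← ENNReal.ofReal_mul (by positivity),
      ← ENNReal.ofReal_mul (by positivity), mul_pow, ← mul_assoc, ← pow_succ',
      Nat.sub_add_cancel hd, ← rpow_natCast R, ← rpow_natCast r, Nat.cast_sub hd, Nat.cast_one,
      mul_right_comm, ← rpow_add hR]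
    ring_nf
  simp only [hfactor, mul_div_cancel_left₀ r hR.ne']
  rw [lintegral_const_mul _ (by fun_prop), lintegral_sq_mul_rpow_heightMeasure hR.le hr.le]
  calc
    _ = (ENNReal.ofReal R * ENNReal.ofReal ((R * r) ^ (d - 1)) *
        ENNReal.ofReal (R ^ (-((d : ℝ) + q)))) * (g r * radialKernel d q r) := by ring
    _ = _ := by rw [hpowers]; ring

lemma lintegral_Ioi_comp_inv_mul_radialKernel (d : ℕ) (q : ℝ) (g : ℝ → ℝ≥0∞) :
    ∫⁻ r in Ioi (0 : ℝ), ENNReal.ofReal (r ^ ((d : ℝ) - 1)) * g r⁻¹ * radialKernel d q r =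
      ∫⁻ r in Ioi (0 : ℝ), ENNReal.ofReal (r ^ (q - 1)) * g r * radialKernel d q r := by
  rw [lintegral_Ioi_comp_inv]
  refine setLIntegral_congr_fun measurableSet_Ioi fun r (hr : 0 < r) => ?_
  have hpowers : ENNReal.ofReal (r ^ (-2 : ℝ)) * ENNReal.ofReal (r⁻¹ ^ ((d : ℝ) - 1)) *
      ENNReal.ofReal (r ^ ((d : ℝ) + q)) = ENNReal.ofReal (r ^ (q - 1)) := by
    rw [← ENNReal.ofReal_mul (by positivity), ← ENNReal.ofReal_mul (by positivity),
      inv_rpow hr.le, ← rpow_neg hr.le, ← rpow_add hr, ← rpow_add hr]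
    ring_nf
  rw [radialKernel_inv hr, inv_inv, ← hpowers]
  ring

variable {w : E → ℝ≥0∞} {g : ℝ → ℝ≥0∞}

lemma lintegral_prod_fst_mul_ratio_mul_gagliardoKernel (q : ℝ) (hw : AEMeasurable w)
    (hg : Measurable g) :
    ∫⁻ z : E × E, w z.1 * (g (‖z.2‖ / ‖z.1‖) * gagliardoKernel q z.1 z.2) =
      (∫⁻ x, w x * ENNReal.ofReal (‖x‖ ^ (-q))) *
        ∫⁻ r in Ioi (0 : ℝ), ENNReal.ofReal (r ^ ((finrank ℝ E : ℝ) - 1)) * g r *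
          radialKernel (finrank ℝ E) q r := by
  have hintegrand : AEMeasurable (fun z : E × E =>
      w z.1 * (g (‖z.2‖ / ‖z.1‖) * gagliardoKernel q z.1 z.2)) (volume.prod volume) :=
    hw.comp_fst.mul (by fun_prop)
  rw [Measure.volume_eq_prod, lintegral_prod _ hintegrand, ← lintegral_mul_const'' _ (by fun_prop)]
  refine lintegral_congr_ae ?_
  filter_upwards [Measure.ae_ne volume (0 : E)] with x hx
  have hkernel : Measurable fun y => g (‖y‖ / ‖x‖) * gagliardoKernel q x y := by
    unfold gagliardoKernel
    fun_prop
  rw [lintegral_const_mul _ hkernel, lintegral_ratio_mul_gagliardoKernel q hg hx, mul_assoc]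

lemma lintegral_prod_snd_mul_ratio_mul_gagliardoKernel (q : ℝ) (hw : AEMeasurable w)
    (hg : Measurable g) :
    ∫⁻ z : E × E, w z.2 * (g (‖z.2‖ / ‖z.1‖) * gagliardoKernel q z.1 z.2) =
      (∫⁻ x, w x * ENNReal.ofReal (‖x‖ ^ (-q))) *
        ∫⁻ r in Ioi (0 : ℝ), ENNReal.ofReal (r ^ (q - 1)) * g r *
          radialKernel (finrank ℝ E) q r := by
  rw [← lintegral_Ioi_comp_inv_mul_radialKernel,
    ← lintegral_prod_fst_mul_ratio_mul_gagliardoKernel (g := fun r => g r⁻¹) q hw (by fun_prop),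
    Measure.volume_eq_prod, ← lintegral_prod_swap]
  refine lintegral_congr fun z => ?_
  rw [Prod.fst_swap, Prod.snd_swap, inv_div, gagliardoKernel_comm]

end GagliardoKernel

section RatioRegion

variable {E : Type*} [NormedAddCommGroup E] {S : Set ℝ}

/-- The pairs `(x, y)` whose ratio of norms `‖y‖ / ‖x‖` lies in `S`. -/
def ratioRegion (E : Type*) [NormedAddCommGroup E] (S : Set ℝ) : Set (E × E) :=
  {z | ‖z.2‖ / ‖z.1‖ ∈ S}

lemma disjoint_ratioRegion_preimage_swap (hS : S ⊆ Ioo 0 1) :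
    Disjoint (ratioRegion E S) (Prod.swap ⁻¹' ratioRegion E S) := by
  refine disjoint_left.2 fun z hz hswap => ?_
  obtain ⟨hpos, hlt⟩ := hS hz
  have hgt : 1 < ‖z.1‖ / ‖z.2‖ := by rw [← inv_div]; exact one_lt_inv_iff₀.2 ⟨hpos, hlt⟩
  exact hgt.not_gt (hS hswap).2

lemma indicator_ratioRegion_mul (S : Set ℝ) (f : E × E → ℝ≥0∞) (g : ℝ → ℝ≥0∞)
    (k : E × E → ℝ≥0∞) :
    (ratioRegion E S).indicator (fun z => f z * (g (‖z.2‖ / ‖z.1‖) * k z)) =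
      fun z => f z * (S.indicator g (‖z.2‖ / ‖z.1‖) * k z) := by
  ext z
  by_cases hz : ‖z.2‖ / ‖z.1‖ ∈ S <;> simp [ratioRegion, hz]

lemma setLIntegral_mul_mul_eq_Ioi_indicator (hS : MeasurableSet S) (hpos : S ⊆ Ioi 0)
    (f g k : ℝ → ℝ≥0∞) :
    ∫⁻ r in S, f r * g r * k r = ∫⁻ r in Ioi 0, f r * S.indicator g r * k r := by
  rw [← inter_eq_self_of_subset_left hpos, ← setLIntegral_indicator hS,
    inter_eq_self_of_subset_left hpos]
  refine lintegral_congr fun r => ?_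
  by_cases hr : r ∈ S <;> simp [hr]

variable [MeasurableSpace E]

lemma measurableSet_ratioRegion [OpensMeasurableSpace E] (hS : MeasurableSet S) :
    MeasurableSet (ratioRegion E S) :=
  hS.preimage (measurable_snd.norm.div measurable_fst.norm)

variable [InnerProductSpace ℝ E] [FiniteDimensional ℝ E] [BorelSpace E] [Nontrivial E]
  {w : E → ℝ≥0∞} {g : ℝ → ℝ≥0∞}

lemma setLIntegral_ratioRegion_fst (q : ℝ) (hS : MeasurableSet S) (hpos : S ⊆ Ioi 0)
    (hw : AEMeasurable w) (hg : Measurable g) :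
    ∫⁻ z in ratioRegion E S, w z.1 * (g (‖z.2‖ / ‖z.1‖) * gagliardoKernel q z.1 z.2) =
      (∫⁻ x, w x * ENNReal.ofReal (‖x‖ ^ (-q))) *
        ∫⁻ r in S, ENNReal.ofReal (r ^ ((finrank ℝ E : ℝ) - 1)) * g r *
          radialKernel (finrank ℝ E) q r := by
  rw [← lintegral_indicator (measurableSet_ratioRegion hS), indicator_ratioRegion_mul,
    setLIntegral_mul_mul_eq_Ioi_indicator hS hpos,
    lintegral_prod_fst_mul_ratio_mul_gagliardoKernel q hw (hg.indicator hS)]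

lemma setLIntegral_ratioRegion_snd (q : ℝ) (hS : MeasurableSet S) (hpos : S ⊆ Ioi 0)
    (hw : AEMeasurable w) (hg : Measurable g) :
    ∫⁻ z in ratioRegion E S, w z.2 * (g (‖z.2‖ / ‖z.1‖) * gagliardoKernel q z.1 z.2) =
      (∫⁻ x, w x * ENNReal.ofReal (‖x‖ ^ (-q))) *
        ∫⁻ r in S, ENNReal.ofReal (r ^ (q - 1)) * g r * radialKernel (finrank ℝ E) q r := by
  rw [← lintegral_indicator (measurableSet_ratioRegion hS), indicator_ratioRegion_mul,
    setLIntegral_mul_mul_eq_Ioi_indicator hS hpos,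
    lintegral_prod_snd_mul_ratio_mul_gagliardoKernel q hw (hg.indicator hS)]

end RatioRegion

section DiscretePicone

variable {p q t : ℝ}

lemma discrete_picone (hp : 1 ≤ p) (ht : t ∈ Ioo (0 : ℝ) 1) (a b : ℝ) :
    (1 - t) ^ (p - 1) * |b| ^ p ≤ |a - b| ^ p + ((1 - t) / t) ^ (p - 1) * |a| ^ p := by
  have ht0 : 0 < t := ht.1
  have hc : 0 < 1 - t := sub_pos.2 ht.2
  have hb : |b| ≤ |a - b| + |a| := by
    simpa [abs_sub_comm, add_comm] using abs_sub_abs_le_abs_sub b a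
  have hconv : |b| ^ p ≤ (1 - t) * (|a - b| / (1 - t)) ^ p + t * (|a| / t) ^ p := calc
    |b| ^ p ≤ ((1 - t) * (|a - b| / (1 - t)) + t * (|a| / t)) ^ p := by
      rw [mul_div_cancel₀ _ hc.ne', mul_div_cancel₀ _ ht0.ne']
      gcongr
    _ ≤ _ := (convexOn_rpow hp).2 (mem_Ici.2 (by positivity)) (mem_Ici.2 (by positivity))
      hc.le ht0.le (by ring)
  calc
    _ ≤ (1 - t) ^ (p - 1) * ((1 - t) * (|a - b| / (1 - t)) ^ p + t * (|a| / t) ^ p) := by gcongr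
    _ = _ := by
      rw [div_rpow (abs_nonneg _) hc.le, div_rpow (abs_nonneg _) ht0.le, div_rpow hc.le ht0.le,
        rpow_sub_one hc.ne', rpow_sub_one ht0.ne']
      field_simp

/-- The coefficient of `|u y| ^ p` in the discrete Picone inequality for the ground state
`‖x‖ ^ (-α)`, as a function of the ratio `r = ‖y‖ / ‖x‖`. -/
def piconeGain (α p r : ℝ) : ℝ≥0∞ := ENNReal.ofReal ((1 - r ^ α) ^ (p - 1))

/-- The coefficient of `|u x| ^ p` in the discrete Picone inequality for the ground state
`‖x‖ ^ (-α)`, as a function of the ratio `r = ‖y‖ / ‖x‖`. -/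
def piconeLoss (α p r : ℝ) : ℝ≥0∞ := ENNReal.ofReal (((1 - r ^ α) / r ^ α) ^ (p - 1))

@[fun_prop]
lemma measurable_piconeGain (α p : ℝ) : Measurable (piconeGain α p) := by
  unfold piconeGain
  fun_prop

@[fun_prop]
lemma measurable_piconeLoss (α p : ℝ) : Measurable (piconeLoss α p) := by
  unfold piconeLoss
  fun_prop

variable {α r : ℝ}

lemma rpow_mem_Ioo_zero_one (hα : 0 < α) (hr : r ∈ Ioo (0 : ℝ) 1) : r ^ α ∈ Ioo (0 : ℝ) 1 :=
  ⟨rpow_pos_of_pos hr.1 α, rpow_lt_one hr.1.le hr.2 hα⟩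

lemma piconeGain_le_one (hp : 1 ≤ p) (hα : 0 < α) (hr : r ∈ Ioo (0 : ℝ) 1) :
    piconeGain α p r ≤ 1 := by
  have ht := rpow_mem_Ioo_zero_one hα hr
  exact ENNReal.ofReal_le_one.2
    (rpow_le_one (sub_nonneg.2 ht.2.le) (by linarith [ht.1]) (sub_nonneg.2 hp))

lemma ofReal_discrete_picone (hp : 1 ≤ p) (hα : 0 < α) (hr : r ∈ Ioo (0 : ℝ) 1) (a b : ℝ) :
    ENNReal.ofReal (|b| ^ p) * piconeGain α p r ≤
      ENNReal.ofReal (|a - b| ^ p) + ENNReal.ofReal (|a| ^ p) * piconeLoss α p r := by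
  have ht := rpow_mem_Ioo_zero_one hα hr
  have hc : 0 < 1 - r ^ α := sub_pos.2 ht.2
  have hpos : 0 < r ^ α := ht.1
  rw [piconeGain, piconeLoss, ← ENNReal.ofReal_mul (by positivity),
    ← ENNReal.ofReal_mul (by positivity), ← ENNReal.ofReal_add (by positivity) (by positivity)]
  refine ENNReal.ofReal_le_ofReal ?_
  simpa only [mul_comm] using discrete_picone hp ht a b

-- The choice of `α` makes the net gain of the Picone inequality the density of the Hardy constant.
lemma rpow_mul_piconeGain_eq_add {d : ℝ} (hα : 0 < α) (hαp : α * p = d - q)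
    (hr : r ∈ Ioo (0 : ℝ) 1) :
    ENNReal.ofReal (r ^ (q - 1)) * piconeGain α p r =
      ENNReal.ofReal (r ^ (q - 1) * |1 - r ^ α| ^ p) +
        ENNReal.ofReal (r ^ (d - 1)) * piconeLoss α p r := by
  have hr0 : 0 < r := hr.1
  have ht := rpow_mem_Ioo_zero_one hα hr
  have hc : 0 < 1 - r ^ α := sub_pos.2 ht.2
  have hpos : 0 < r ^ α := ht.1
  have hpowers : r ^ (d - 1) = r ^ (q - 1) * r ^ α * (r ^ α) ^ (p - 1) := by
    rw [← rpow_mul hr0.le, ← rpow_add hr0, ← rpow_add hr0]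
    congr 1
    linarith
  rw [piconeGain, piconeLoss, ← ENNReal.ofReal_mul (by positivity),
    ← ENNReal.ofReal_mul (by positivity), ← ENNReal.ofReal_add (by positivity) (by positivity),
    abs_of_pos hc, hpowers, div_rpow hc.le hpos.le, rpow_sub_one hc.ne']
  congr 1
  field_simp
  ring

end DiscretePicone

section Truncation

lemma two_mul_setLIntegral_le_of_disjoint_swap {α : Type*} [MeasurableSpace α] {μ : Measure α}
    [SFinite μ] {f : α × α → ℝ≥0∞} {P : Set (α × α)} (hf : ∀ z, f z.swap = f z)
    (hP : MeasurableSet P) (hdisj : Disjoint P (Prod.swap ⁻¹' P)) :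
    2 * ∫⁻ z in P, f z ∂μ.prod μ ≤ ∫⁻ z, f z ∂μ.prod μ := by
  have hswap : ∫⁻ z in Prod.swap ⁻¹' P, f z ∂μ.prod μ = ∫⁻ z in P, f z ∂μ.prod μ := by
    simpa only [hf] using Measure.measurePreserving_swap.setLIntegral_comp_preimage_emb
      MeasurableEquiv.prodComm.measurableEmbedding f P (μ := μ.prod μ)
  calc
    _ = ∫⁻ z in P ∪ Prod.swap ⁻¹' P, f z ∂μ.prod μ := by
      rw [lintegral_union (measurable_swap hP) hdisj, hswap, two_mul]
    _ ≤ _ := setLIntegral_le_lintegral _ _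

lemma setLIntegral_Ioo_le_of_forall_lt {f : ℝ → ℝ≥0∞} {μ : Measure ℝ} {a b : ℝ} {C : ℝ≥0∞}
    (hab : a < b) (h : ∀ c ∈ Ioo a b, ∫⁻ x in Ioo a c, f x ∂μ ≤ C) :
    ∫⁻ x in Ioo a b, f x ∂μ ≤ C := by
  obtain ⟨c, hmono, hc, hlim⟩ := exists_seq_strictMono_tendsto' hab
  have hunion : ⋃ n, Ioo a (c n) = Ioo a b := by
    refine (iUnion_subset fun n => Ioo_subset_Ioo_right (hc n).2.le).antisymm fun x hx => ?_
    obtain ⟨n, hn⟩ := (hlim.eventually_const_lt hx.2).exists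
    exact mem_iUnion.2 ⟨n, hx.1, hn⟩
  have hdir : Directed (· ⊆ ·) fun n => Ioo a (c n) :=
    Monotone.directed_le fun m n hmn => Ioo_subset_Ioo_right (hmono.monotone hmn)
  rw [← hunion, setLIntegral_iUnion_of_directed f hdir]
  exact iSup_le fun n => h (c n) (hc n)

end Truncation

section HardyConstant

/-- The density in `r = ‖y‖ / ‖x‖` whose integral over `(0, 1)` is half the reciprocal of the sharp
constant in the fractional Hardy inequality in dimension `d`, where `q = s * p` in terms of the
usual parameters. -/
def hardyDensity (d : ℕ) (p q r : ℝ) : ℝ≥0∞ :=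
  ENNReal.ofReal (r ^ (q - 1) * |1 - r ^ (((d : ℝ) - q) / p)| ^ p) * radialKernel d q r

variable {d : ℕ} {p q : ℝ}

lemma measurable_hardyDensity (d : ℕ) (p q : ℝ) : Measurable (hardyDensity d p q) :=
  Measurable.mul (by fun_prop) (measurable_radialKernel d q)

lemma hardyDensity_ne_zero (hd : heightMeasure d ≠ 0) (hp : 0 < p) (hqd : q < d) {r : ℝ}
    (hr : r ∈ Ioo (0 : ℝ) 1) : hardyDensity d p q r ≠ 0 := by
  have hr0 : 0 < r := hr.1
  have ht := rpow_mem_Ioo_zero_one (div_pos (sub_pos.2 hqd) hp) hr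
  have habs : 0 < |1 - r ^ (((d : ℝ) - q) / p)| := abs_pos.2 (sub_pos.2 ht.2).ne'
  exact mul_ne_zero (ENNReal.ofReal_pos.2 (by positivity)).ne'
    (radialKernel_ne_zero hd (Ioo_subset_Ico_self hr))

lemma setLIntegral_hardyDensity_ne_zero (hd : heightMeasure d ≠ 0) (hp : 0 < p) (hqd : q < d) :
    ∫⁻ r in Ioo 0 1, hardyDensity d p q r ≠ 0 := by
  rw [← pos_iff_ne_zero, setLIntegral_pos_iff (measurable_hardyDensity d p q)]
  have hsupp : Function.support (hardyDensity d p q) ∩ Ioo 0 1 = Ioo 0 1 :=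
    inter_eq_right.2 fun r hr => hardyDensity_ne_zero hd hp hqd hr
  simp [hsupp]

lemma fracLambda_eq_inv_toReal_setLIntegral {s : ℝ} (hd : heightMeasure d univ ≠ ∞)
    (hq : 0 ≤ s * p) :
    fracLambda d s p = (2 * (∫⁻ r in Ioo 0 1, hardyDensity d p (s * p) r).toReal)⁻¹ := by
  rw [fracLambda, ← integral_toReal (measurable_hardyDensity d p (s * p)).aemeasurable]
  · congr 2
    refine setIntegral_congr_fun measurableSet_Ioo fun r hr => ?_
    have hr0 : 0 < r := hr.1
    simp only [hardyDensity]
    rw [fracPsi_eq_toReal_radialKernel d s p hr, ENNReal.toReal_mul,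
      ENNReal.toReal_ofReal (by positivity)]
  · filter_upwards [ae_restrict_mem measurableSet_Ioo] with r hr
    exact ENNReal.mul_lt_top ENNReal.ofReal_lt_top
      ((radialKernel_le hq hr.1.le le_rfl hr.2).trans_lt
        (ENNReal.mul_lt_top ENNReal.ofReal_lt_top hd.lt_top))

lemma setLIntegral_rpow_mul_piconeGain_mul_radialKernel_ne_top {α δ : ℝ}
    (hd : heightMeasure d univ ≠ ∞) (hp : 1 ≤ p) (hq : 0 < q) (hα : 0 < α) (hδ : δ ∈ Ioo 0 1) :
    ∫⁻ r in Ioo 0 δ, ENNReal.ofReal (r ^ (q - 1)) * piconeGain α p r * radialKernel d q r ≠ ∞ := by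
  set K := ENNReal.ofReal ((1 - δ) ^ (-((d : ℝ) + q))) * heightMeasure d univ
  have hK : K ≠ ∞ := ENNReal.mul_ne_top ENNReal.ofReal_ne_top hd
  have hpower : ∫⁻ r in Ioo 0 δ, ENNReal.ofReal (r ^ (q - 1)) ≠ ∞ :=
    ((intervalIntegral.integrableOn_Ioo_rpow_iff hδ.1).2 (by linarith)).lintegral_lt_top.ne
  refine ne_top_of_le_ne_top (ENNReal.mul_ne_top hpower hK) ?_
  rw [← lintegral_mul_const' _ _ hK]
  refine setLIntegral_mono' measurableSet_Ioo fun r hr => ?_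
  gcongr
  · exact mul_le_of_le_one_right' (piconeGain_le_one hp hα ⟨hr.1, hr.2.trans hδ.2⟩)
  · exact radialKernel_le hq.le hr.1.le hr.2.le hδ.2

lemma setLIntegral_rpow_mul_piconeGain_mul_radialKernel_eq_add {δ : ℝ} (hp : 0 < p) (hqd : q < d)
    (hδ : δ ≤ 1) :
    ∫⁻ r in Ioo 0 δ, ENNReal.ofReal (r ^ (q - 1)) * piconeGain (((d : ℝ) - q) / p) p r *
        radialKernel d q r =
      (∫⁻ r in Ioo 0 δ, hardyDensity d p q r) +
        ∫⁻ r in Ioo 0 δ, ENNReal.ofReal (r ^ ((d : ℝ) - 1)) *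
          piconeLoss (((d : ℝ) - q) / p) p r * radialKernel d q r := by
  rw [← lintegral_add_left (measurable_hardyDensity d p q)]
  refine setLIntegral_congr_fun measurableSet_Ioo fun r hr => ?_
  simp only [hardyDensity]
  rw [rpow_mul_piconeGain_eq_add (div_pos (sub_pos.2 hqd) hp) (div_mul_cancel₀ _ hp.ne')
    ⟨hr.1, hr.2.trans_le hδ⟩, add_mul]

end HardyConstant

section HardyInequality

variable {E : Type*} [NormedAddCommGroup E] [InnerProductSpace ℝ E]

/-- The integrand of the Gagliardo seminorm of exponent `p` and order `q / p`. -/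
def gagliardoDensity (p q : ℝ) (u : E → ℝ) (z : E × E) : ℝ≥0∞ :=
  ENNReal.ofReal (|u z.1 - u z.2| ^ p) * gagliardoKernel q z.1 z.2

lemma gagliardoDensity_swap (p q : ℝ) (u : E → ℝ) (z : E × E) :
    gagliardoDensity p q u z.swap = gagliardoDensity p q u z := by
  rw [gagliardoDensity, gagliardoDensity, Prod.fst_swap, Prod.snd_swap, abs_sub_comm,
    gagliardoKernel_comm]

variable [FiniteDimensional ℝ E] [MeasurableSpace E] [BorelSpace E]

/-- The left-hand side of the fractional Hardy inequality as an extended nonnegative number. -/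
def hardyLIntegral (p q : ℝ) (u : E → ℝ) : ℝ≥0∞ :=
  ∫⁻ x, ENNReal.ofReal (|u x| ^ p) * ENNReal.ofReal (‖x‖ ^ (-q))

variable [Nontrivial E] {p q δ : ℝ} {u : E → ℝ}

lemma lintegral_piconeGain_le (hp : 1 ≤ p) {α : ℝ} (hα : 0 < α) (hδ : δ ≤ 1)
    (hu : AEMeasurable u) :
    hardyLIntegral p q u * (∫⁻ r in Ioo 0 δ, ENNReal.ofReal (r ^ (q - 1)) * piconeGain α p r *
        radialKernel (finrank ℝ E) q r) ≤
      (∫⁻ z in ratioRegion E (Ioo 0 δ), gagliardoDensity p q u z) +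
        hardyLIntegral p q u * ∫⁻ r in Ioo 0 δ, ENNReal.ofReal (r ^ ((finrank ℝ E : ℝ) - 1)) *
          piconeLoss α p r * radialKernel (finrank ℝ E) q r := by
  have hw : AEMeasurable fun x => ENNReal.ofReal (|u x| ^ p) := by fun_prop
  have hpos : Ioo 0 δ ⊆ Ioi 0 := Ioo_subset_Ioi_self
  have hloss : AEMeasurable (fun z : E × E => ENNReal.ofReal (|u z.1| ^ p) *
      (piconeLoss α p (‖z.2‖ / ‖z.1‖) * gagliardoKernel q z.1 z.2))
      (volume.restrict (ratioRegion E (Ioo 0 δ))) :=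
    (hw.comp_fst.mul (by fun_prop)).mono_measure Measure.restrict_le_self
  rw [hardyLIntegral, ← setLIntegral_ratioRegion_snd q measurableSet_Ioo hpos hw (by fun_prop),
    ← setLIntegral_ratioRegion_fst q measurableSet_Ioo hpos hw (by fun_prop),
    ← lintegral_add_right' _ hloss]
  refine setLIntegral_mono' (measurableSet_ratioRegion measurableSet_Ioo) fun z hz => ?_
  rw [gagliardoDensity, ← mul_assoc, ← mul_assoc, ← add_mul]
  gcongr
  exact ofReal_discrete_picone hp hα ⟨hz.1, hz.2.trans_le hδ⟩ _ _

lemma hardyLIntegral_mul_setLIntegral_hardyDensity_le (hp : 1 ≤ p) (hq : 0 < q)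
    (hqd : q < finrank ℝ E) (hδ : δ ∈ Ioo 0 1) (hu : AEMeasurable u)
    (hfin : hardyLIntegral p q u ≠ ∞) :
    hardyLIntegral p q u * (∫⁻ r in Ioo 0 δ, hardyDensity (finrank ℝ E) p q r) ≤
      ∫⁻ z in ratioRegion E (Ioo 0 δ), gagliardoDensity p q u z := by
  have hp0 : 0 < p := one_pos.trans_le hp
  have hα : 0 < ((finrank ℝ E : ℝ) - q) / p := div_pos (sub_pos.2 hqd) hp0
  have hpicone := lintegral_piconeGain_le (q := q) hp hα hδ.2.le hu
  have hgain := setLIntegral_rpow_mul_piconeGain_mul_radialKernel_ne_top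
    (heightMeasure_finrank_univ_ne_top E) hp hq hα hδ
  have hsplit := setLIntegral_rpow_mul_piconeGain_mul_radialKernel_eq_add hp0 hqd hδ.2.le
  rw [hsplit] at hgain
  rw [hsplit, mul_add] at hpicone
  have hloss := ENNReal.mul_ne_top hfin (ENNReal.add_ne_top.1 hgain).2
  exact (ENNReal.add_le_add_iff_right hloss).1 hpicone

theorem two_mul_hardyLIntegral_mul_setLIntegral_hardyDensity_le (hp : 1 ≤ p) (hq : 0 < q)
    (hqd : q < finrank ℝ E) (hu : AEMeasurable u) (hfin : hardyLIntegral p q u ≠ ∞) :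
    2 * (hardyLIntegral p q u * ∫⁻ r in Ioo 0 1, hardyDensity (finrank ℝ E) p q r) ≤
      ∫⁻ z, gagliardoDensity p q u z := by
  have hdensity := measurable_hardyDensity (finrank ℝ E) p q
  rw [← mul_assoc, ← lintegral_const_mul _ hdensity]
  refine setLIntegral_Ioo_le_of_forall_lt one_pos fun δ hδ => ?_
  rw [lintegral_const_mul _ hdensity, mul_assoc]
  calc
    _ ≤ 2 * ∫⁻ z in ratioRegion E (Ioo 0 δ), gagliardoDensity p q u z := by
      gcongr
      exact hardyLIntegral_mul_setLIntegral_hardyDensity_le hp hq hqd hδ hu hfin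
    _ ≤ _ := two_mul_setLIntegral_le_of_disjoint_swap (gagliardoDensity_swap p q u)
      (measurableSet_ratioRegion measurableSet_Ioo)
      (disjoint_ratioRegion_preimage_swap (Ioo_subset_Ioo_right hδ.2.le))

end HardyInequality

section GeneralInequality

variable {E : Type*} [NormedAddCommGroup E] [InnerProductSpace ℝ E] [FiniteDimensional ℝ E]
  [MeasurableSpace E] [BorelSpace E] {p q : ℝ} {u : E → ℝ}

lemma hardyLIntegral_eq_ofReal_integral (hint : Integrable fun x => |u x| ^ p / ‖x‖ ^ q) :
    hardyLIntegral p q u = ENNReal.ofReal (∫ x, |u x| ^ p / ‖x‖ ^ q) := by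
  rw [ofReal_integral_eq_lintegral_ofReal hint (.of_forall fun x => by positivity), hardyLIntegral]
  refine lintegral_congr fun x => ?_
  rw [← ENNReal.ofReal_mul (by positivity), rpow_neg (norm_nonneg _), div_eq_mul_inv]

lemma lintegral_gagliardoDensity_eq_ofReal_integral
    (hint : Integrable fun z : E × E =>
      |u z.1 - u z.2| ^ p / ‖z.1 - z.2‖ ^ ((finrank ℝ E : ℝ) + q)) :
    ∫⁻ z, gagliardoDensity p q u z =
      ENNReal.ofReal (∫ x, ∫ y, |u x - u y| ^ p / ‖x - y‖ ^ ((finrank ℝ E : ℝ) + q)) := by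
  rw [← integral_prod _ hint, ← Measure.volume_eq_prod,
    ofReal_integral_eq_lintegral_ofReal hint (.of_forall fun z => by positivity)]
  refine lintegral_congr fun z => ?_
  rw [gagliardoDensity, gagliardoKernel, ← ENNReal.ofReal_mul (by positivity),
    rpow_neg (norm_nonneg _), div_eq_mul_inv]

lemma le_inv_toReal_mul_of_ofReal_mul_le {a b : ℝ} {c : ℝ≥0∞} (hb : 0 ≤ b) (hc : c ≠ 0)
    (h : ENNReal.ofReal a * c ≤ ENNReal.ofReal b) : a ≤ c.toReal⁻¹ * b := by
  rw [← ENNReal.le_div_iff_mul_le (.inl hc) (.inr ENNReal.ofReal_ne_top),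
    ENNReal.ofReal_le_iff_le_toReal (ENNReal.div_ne_top ENNReal.ofReal_ne_top hc),
    ENNReal.toReal_div, ENNReal.toReal_ofReal hb] at h
  rwa [inv_mul_eq_div]

theorem sharp_fractional_hardy_general {s : ℝ} (hp : 1 ≤ p) (hs : 0 < s)
    (hsp : s * p < finrank ℝ E) (hu : AEMeasurable u)
    (hhardy : Integrable fun x => |u x| ^ p / ‖x‖ ^ (s * p))
    (hgagliardo : Integrable fun z : E × E =>
      |u z.1 - u z.2| ^ p / ‖z.1 - z.2‖ ^ ((finrank ℝ E : ℝ) + s * p)) :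
    ∫ x, |u x| ^ p / ‖x‖ ^ (s * p) ≤ fracLambda (finrank ℝ E) s p *
      ∫ x, ∫ y, |u x - u y| ^ p / ‖x - y‖ ^ ((finrank ℝ E : ℝ) + s * p) := by
  have hp0 : 0 < p := one_pos.trans_le hp
  have hq : 0 < s * p := mul_pos hs hp0
  have : Nontrivial E := nontrivial_of_finrank_pos (R := ℝ) (by exact_mod_cast hq.trans hsp)
  have hleft := hardyLIntegral_eq_ofReal_integral hhardy
  have hmain := two_mul_hardyLIntegral_mul_setLIntegral_hardyDensity_le hp hq hsp hu
    (hleft ▸ ENNReal.ofReal_ne_top)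
  have hconst := setLIntegral_hardyDensity_ne_zero (heightMeasure_finrank_ne_zero E) hp0 hsp
  rw [hleft, lintegral_gagliardoDensity_eq_ofReal_integral hgagliardo, mul_left_comm] at hmain
  rw [fracLambda_eq_inv_toReal_setLIntegral (heightMeasure_finrank_univ_ne_top E) hq.le]
  simpa using le_inv_toReal_mul_of_ofReal_mul_le
    (integral_nonneg fun x => integral_nonneg fun y => by positivity)
    (mul_ne_zero two_ne_zero hconst) hmain

end GeneralInequality

section Integrability

variable {E : Type*} [NormedAddCommGroup E] {p q : ℝ} {u : E → ℝ}

lemma exists_abs_sub_le_mul_min_norm_sub_one {K : NNReal} (hu : LipschitzWith K u)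
    (hsupp : HasCompactSupport u) :
    ∃ C, 0 ≤ C ∧ ∀ x y, |u x - u y| ≤ C * min ‖x - y‖ 1 := by
  obtain ⟨M, hM⟩ := hsupp.exists_bound_of_continuous hu.continuous
  refine ⟨max K (M + M), by positivity, fun x y => ?_⟩
  rw [mul_min_of_nonneg _ _ (by positivity), mul_one]
  refine le_min ?_ (((abs_sub _ _).trans (add_le_add (hM x) (hM y))).trans (le_max_right _ _))
  calc
    |u x - u y| ≤ K * ‖x - y‖ := by simpa [dist_eq_norm] using hu.dist_le_mul x y
    _ ≤ _ := by gcongr; exact le_max_left _ _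

lemma abs_sub_rpow_le_indicator_tsupport_mul (hp : p ≠ 0) (u : E → ℝ) (x y : E) :
    |u x - u y| ^ p ≤
      ((tsupport u).indicator 1 x + (tsupport u).indicator 1 y) * |u x - u y| ^ p := by
  have hnonneg : 0 ≤ |u x - u y| ^ p := by positivity
  by_cases hx : x ∈ tsupport u <;> by_cases hy : y ∈ tsupport u
  · simp only [hx, hy, indicator_of_mem, Pi.one_apply]
    linarith
  · simp [hx, hy]
  · simp [hx, hy]
  · simp [image_eq_zero_of_notMem_tsupport hx, image_eq_zero_of_notMem_tsupport hy, hp]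

variable [NormedSpace ℝ E] [FiniteDimensional ℝ E] [MeasurableSpace E] [BorelSpace E]
  {μ : Measure E} [μ.IsAddHaarMeasure]

lemma integrable_abs_rpow_div_norm_rpow (hd : 1 ≤ finrank ℝ E) (hp : 0 < p) (hq : q < finrank ℝ E)
    (hu : Continuous u) (hsupp : HasCompactSupport u) :
    Integrable (fun x => |u x| ^ p / ‖x‖ ^ q) μ := by
  obtain ⟨M, hM⟩ := hsupp.exists_bound_of_continuous hu
  have hbound : ∀ x, ‖|u x| ^ p / ‖x‖ ^ q‖ ≤ M ^ p * ‖x‖ ^ (-q) := fun x => by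
    rw [norm_of_nonneg (by positivity), rpow_neg (norm_nonneg _), ← div_eq_mul_inv]
    gcongr
    exact hM x
  have hmeas : Measurable fun x => |u x| ^ p / ‖x‖ ^ q := by fun_prop
  have hlocal := locallyIntegrable_of_norm_le_rpow (μ := μ) hd hq (.of_forall hbound)
    hmeas.aestronglyMeasurable
  refine (integrableOn_iff_integrable_of_support_subset fun x hx => ?_).1
    (hlocal.integrableOn_isCompact hsupp.isCompact)
  by_contra hxu
  exact hx (by simp [image_eq_zero_of_notMem_tsupport hxu, zero_rpow hp.ne'])

lemma integrable_min_norm_one_rpow_div_norm_rpow [Nontrivial E] (hq : 0 < q) (hqp : q < p) :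
    Integrable (fun x : E => min ‖x‖ 1 ^ p / ‖x‖ ^ ((finrank ℝ E : ℝ) + q)) μ := by
  have hpower : ∀ {a r : ℝ}, 0 < r →
      r ^ (finrank ℝ E - 1) * (r ^ a / r ^ ((finrank ℝ E : ℝ) + q)) = r ^ (a - q - 1) :=
    fun hr => by
      rw [← rpow_natCast, ← rpow_sub hr, ← rpow_add hr, Nat.cast_sub finrank_pos]
      push_cast
      ring_nf
  rw [integrable_fun_norm_addHaar μ (f := fun r => min r 1 ^ p / r ^ ((finrank ℝ E : ℝ) + q)),
    ← Ioo_union_Ici_eq_Ioi one_pos]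
  refine IntegrableOn.union ?_ ?_
  · refine ((intervalIntegral.integrableOn_Ioo_rpow_iff one_pos).2
      (by linarith : -1 < p - q - 1)).congr_fun (fun r hr => ?_) measurableSet_Ioo
    simp only [smul_eq_mul]
    rw [min_eq_left hr.2.le, hpower hr.1]
  · rw [integrableOn_Ici_iff_integrableOn_Ioi]
    refine (integrableOn_Ioi_rpow_of_lt (by linarith : 0 - q - 1 < -1) one_pos).congr_fun
      (fun r hr => ?_) measurableSet_Ioi
    simp only [smul_eq_mul]
    rw [min_eq_right (mem_Ioi.1 hr).le, one_rpow, ← hpower (a := 0) (one_pos.trans hr),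
      rpow_zero]

lemma integrable_abs_sub_rpow_div_norm_sub_rpow [Nontrivial E] (hq : 0 < q) (hqp : q < p)
    {K : NNReal} (hu : LipschitzWith K u) (hsupp : HasCompactSupport u) :
    Integrable (fun z : E × E => |u z.1 - u z.2| ^ p / ‖z.1 - z.2‖ ^ ((finrank ℝ E : ℝ) + q))
      (μ.prod μ) := by
  obtain ⟨C, hC, hbound⟩ := exists_abs_sub_le_mul_min_norm_sub_one hu hsupp
  set m : E → ℝ := fun x => min ‖x‖ 1 ^ p / ‖x‖ ^ ((finrank ℝ E : ℝ) + q)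
  set χ : E → ℝ := (tsupport u).indicator 1
  have hχ : Integrable χ μ := (integrable_indicator_iff (isClosed_tsupport u).measurableSet).2
    (integrableOn_const hsupp.isCompact.measure_lt_top.ne)
  have hsnd : Integrable (fun z : E × E => χ z.2 * m (z.1 - z.2)) (μ.prod μ) :=
    hχ.convolution_integrand (ContinuousLinearMap.mul ℝ ℝ)
      (integrable_min_norm_one_rpow_div_norm_rpow hq hqp)
  have hcont : Continuous u := hu.continuous
  have hmeas : Measurable fun z : E × E =>
      |u z.1 - u z.2| ^ p / ‖z.1 - z.2‖ ^ ((finrank ℝ E : ℝ) + q) := by fun_prop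
  refine ((hsnd.add hsnd.swap).const_mul (C ^ p)).mono' hmeas.aestronglyMeasurable
    (.of_forall fun z => ?_)
  set N := ‖z.1 - z.2‖ ^ ((finrank ℝ E : ℝ) + q)
  have hp : 0 < p := hq.trans hqp
  have hχ0 : 0 ≤ χ z.1 + χ z.2 :=
    add_nonneg (indicator_nonneg (by simp) _) (indicator_nonneg (by simp) _)
  have hm : m (z.2 - z.1) = m (z.1 - z.2) := by simp only [m, norm_sub_rev]
  calc
    ‖|u z.1 - u z.2| ^ p / N‖ = |u z.1 - u z.2| ^ p / N := norm_of_nonneg (by positivity)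
    _ ≤ (χ z.1 + χ z.2) * |u z.1 - u z.2| ^ p / N := by
      gcongr
      exact abs_sub_rpow_le_indicator_tsupport_mul hp.ne' u _ _
    _ ≤ (χ z.1 + χ z.2) * (C * min ‖z.1 - z.2‖ 1) ^ p / N := by
      gcongr
      exact hbound _ _
    _ = C ^ p * (χ z.2 * m (z.1 - z.2) + χ z.1 * m (z.2 - z.1)) := by
      rw [hm, mul_rpow hC (by positivity)]
      ring

end Integrability

end

theorem sharp_fractional_hardy
    (N : ℕ) (hN : 1 ≤ N) (p s : ℝ) (hp : 1 ≤ p) (hs : s ∈ Ioo (0 : ℝ) 1)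
    (hsp : s * p < N)
    (u : EuclideanSpace ℝ (Fin N) → ℝ) (hu : ContDiff ℝ (⊤ : ℕ∞) u) (husupp : HasCompactSupport u) :
    ∫ x : EuclideanSpace ℝ (Fin N), |u x| ^ p / ‖x‖ ^ (s * p) ≤
      fracLambda N s p *
        ∫ x : EuclideanSpace ℝ (Fin N), ∫ y : EuclideanSpace ℝ (Fin N), |u x - u y| ^ p / ‖x - y‖ ^ ((N : ℝ) + s * p) := by
  have hp0 : 0 < p := one_pos.trans_le hp
  have hdim : Module.finrank ℝ (EuclideanSpace ℝ (Fin N)) = N := finrank_euclideanSpace_fin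
  have : Nontrivial (EuclideanSpace ℝ (Fin N)) :=
    Module.nontrivial_of_finrank_pos (R := ℝ) (by omega)
  obtain ⟨K, hK⟩ := hu.lipschitzWith_of_hasCompactSupport husupp (by simp)
  have hhardy := integrable_abs_rpow_div_norm_rpow (μ := volume) (hdim.ge.trans' hN) hp0
    (by rwa [hdim]) hu.continuous husupp
  have hgagliardo := integrable_abs_sub_rpow_div_norm_sub_rpow (μ := volume) (mul_pos hs.1 hp0)
    (mul_lt_of_lt_one_left hp0 hs.2) hK husupp
  simpa only [hdim] using sharp_fractional_hardy_general hp hs.1 (by rwa [hdim])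
    hu.continuous.aemeasurable hhardy hgagliardo

end
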